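/- Let $\sigma : \mathbb{R}^d \to (0,\infty]$ satisfy $\sigma \ge 2h > 0$, and let $\delta = h/10$. Then there is a constant $C = C(d,h)$ such that $\|f\|_{\widetilde H^{1/2}_{\sigma+\delta}} \le C\|f\|_{\widetilde H^{1/2}_{\sigma}}$ for all $f \in \widetilde H^{1/2}_{\sigma}(\mathbb{R}^d)$. The proof splits the increment region $\sigma(x) \le |k| \le \sigma(x)+\delta$, writes $f(x+k)-f(x) = (f(x+k)-f(x+\theta(x)k+u)) + (f(x+\theta(x)k+u)-f(x))$ with $\theta(x) = 1 - h/(2\sigma(x))$, and averages over $|u| \le h/4$. -/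

import Mathlib

open MeasureTheory
open scoped ENNReal

noncomputable section

/-- Squared screened fractional Sobolev seminorm
`‖f‖²_{H̃^{1/2}_σ} = ∫_{ℝ^d} ∫_{B(0,σ(x))} |f(x+k)-f(x)|²/|k|^{d+1} dk dx`. -/
def screenedSq (d : ℕ) (σ : EuclideanSpace ℝ (Fin d) → ℝ≥0∞)
    (f : EuclideanSpace ℝ (Fin d) → ℝ) : ℝ≥0∞ :=
  ∫⁻ x, ∫⁻ k in {k : EuclideanSpace ℝ (Fin d) | (‖k‖₊ : ℝ≥0∞) < σ x},
    ENNReal.ofReal ((f (x + k) - f x) ^ 2 / ‖k‖ ^ (d + 1))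

/-!
An increment of length `s ≤ |k| < s + δ`, where `s = σ x ≥ 4 δ`, is cut at the intermediate point
`x + (1 - 2 δ / s) k + u` with `|u| < δ`, and the resulting inequality is averaged over `u`. Seen
from `x`, the intermediate point lies at distance less than `s`, so the near piece is controlled by
the screened energy at `x`, after a change of variables in `k` whose Jacobian is at most `2 ^ d`.
Seen from the far endpoint `x + k`, it lies at distance less than `4 δ`, within the screening
radius there; the tail of the kernel is integrable, so the far piece sums to a finite multiple of
the energy. Enlargements larger than `δ` are reached by iteration.
-/

open Metric Module
open scoped NNReal

section Translation

variable {G : Type*} [AddGroup G] [MeasurableSpace G] [MeasurableAdd₂ G] {μ ν : Measure G}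
  [SFinite μ] [SFinite ν] [μ.IsAddRightInvariant]

theorem lintegral_lintegral_mul_comp_add {w g : G → ℝ≥0∞} (hw : Measurable w)
    (hg : Measurable g) :
    ∫⁻ x, ∫⁻ k, w k * g (x + k) ∂ν ∂μ = (∫⁻ k, w k ∂ν) * ∫⁻ y, g y ∂μ := by
  rw [lintegral_lintegral_swap (by fun_prop), ← lintegral_mul_const _ hw]
  refine lintegral_congr fun k ↦ ?_
  rw [lintegral_const_mul _ (by fun_prop), lintegral_add_right_eq_self g k]

end Translation

theorem edist_rpow_le {F : Type*} [PseudoEMetricSpace F] {p : ℝ} (hp : 1 ≤ p) (a b c : F) :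
    edist a c ^ p ≤ 2 ^ (p - 1) * (edist b a ^ p + edist b c ^ p) :=
  calc edist a c ^ p ≤ (edist b a + edist b c) ^ p := by
        gcongr
        exact edist_triangle_left a c b
    _ ≤ 2 ^ (p - 1) * (edist b a ^ p + edist b c ^ p) :=
        ENNReal.rpow_add_le_mul_rpow_add_rpow _ _ hp

theorem exists_pos_le_ofReal_rpow {A : ℝ≥0∞} (hA : A ≠ ⊤) {p : ℝ} (hp : 1 ≤ p) :
    ∃ C : ℝ, 0 < C ∧ A ≤ ENNReal.ofReal (C ^ p) := by
  have hA₀ : 0 ≤ A.toReal := ENNReal.toReal_nonneg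
  refine ⟨A.toReal + 1, by positivity, ?_⟩
  rw [ENNReal.le_ofReal_iff_toReal_le hA (by positivity)]
  calc A.toReal ≤ A.toReal + 1 := by linarith
    _ ≤ (A.toReal + 1) ^ p := Real.self_le_rpow_of_one_le (by linarith) hp

section Shell

variable {E : Type*} [SeminormedAddCommGroup E] [NormedSpace ℝ E] {δ s : ℝ} {k u : E}

theorem norm_smul_le_of_norm_lt_add (hδ : 0 < δ) (hs : 4 * δ ≤ s) (hk : ‖k‖ < s + δ) :
    ‖(2 * δ / s) • k‖ ≤ 3 * δ := by
  have hs₀ : 0 < s := by linarith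
  rw [norm_smul, Real.norm_of_nonneg (by positivity), div_mul_eq_mul_div, div_le_iff₀ hs₀]
  nlinarith

theorem norm_smul_add_lt_of_norm_lt_add (hδ : 0 < δ) (hs : 4 * δ ≤ s) (hk : ‖k‖ < s + δ)
    (hu : ‖u‖ < δ) : ‖(1 - 2 * δ / s) • k + u‖ < s := by
  have hs₀ : 0 < s := by linarith
  have hθ : 0 ≤ 1 - 2 * δ / s := by
    rw [sub_nonneg, div_le_one hs₀]
    linarith
  have hcontract : (1 - 2 * δ / s) * (s + δ) ≤ s - δ := by
    have h_expand : (1 - 2 * δ / s) * (s + δ) = s - δ - 2 * δ / s * δ := by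
      field_simp
      ring
    rw [h_expand]
    exact sub_le_self _ (by positivity)
  calc ‖(1 - 2 * δ / s) • k + u‖ ≤ ‖(1 - 2 * δ / s) • k‖ + ‖u‖ := norm_add_le _ _
    _ = (1 - 2 * δ / s) * ‖k‖ + ‖u‖ := by rw [norm_smul, Real.norm_of_nonneg hθ]
    _ ≤ (1 - 2 * δ / s) * (s + δ) + ‖u‖ := by gcongr
    _ < s := by linarith

end Shell

section Energy

variable {E : Type*} [SeminormedAddCommGroup E] [MeasurableSpace E] {μ : Measure E}

theorem setLIntegral_ball_comp_sub_le [BorelSpace E] [μ.IsAddRightInvariant] {η ρ : ℝ}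
    {c : E} (hc : ‖c‖ + η ≤ ρ) (φ : E → ℝ≥0∞) :
    ∫⁻ u in ball 0 η, φ (u - c) ∂μ ≤ ∫⁻ v in ball 0 ρ, φ v ∂μ := by
  have hpre : (· - c) ⁻¹' ball (-c) η = ball (0 : E) η := by
    ext u
    simp [dist_eq_norm]
  rw [← hpre, (measurePreserving_sub_right μ c).setLIntegral_comp_preimage_emb
    (MeasurableEquiv.subRight c).measurableEmbedding]
  exact lintegral_mono_set (ball_subset_ball' (by simpa [add_comm] using hc))

/-- A radially nonincreasing, everywhere positive kernel whose tails are integrable; it may be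
singular at the origin. These are the weights `w` put on an increment `f (x + k) - f x`. -/
structure IsRadialKernel (μ : Measure E) (w : E → ℝ≥0∞) : Prop where
  measurable : Measurable w
  le_of_norm_le : ∀ ⦃y z : E⦄, ‖y‖ ≤ ‖z‖ → w z ≤ w y
  ne_zero : ∀ y, w y ≠ 0
  setLIntegral_compl_ball_ne_top : ∀ ⦃ρ : ℝ⦄, 0 < ρ → ∫⁻ k in (ball 0 ρ)ᶜ, w k ∂μ ≠ ⊤

variable {F : Type*} [PseudoEMetricSpace F]

/-- The screened energy `∫ ∫_{|k| < σ x} w k |f (x + k) - f x| ^ p dk dx`, i.e. the `p`-th power of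
the screened fractional Sobolev seminorm when `w` is a negative power of the norm. -/
def screenedEnergy (μ : Measure E) (w : E → ℝ≥0∞) (p : ℝ) (σ : E → ℝ≥0∞) (f : E → F) : ℝ≥0∞ :=
  ∫⁻ x, ∫⁻ k in eball 0 (σ x), w k * edist (f (x + k)) (f x) ^ p ∂μ ∂μ

/-- The unweighted `p`-th power increment `∫_{|v| < ρ} |f (y + v) - f y| ^ p dv` of `f` around `y`,
which absorbs the part of a long increment that is measured from its far endpoint. -/
def ballIncrement (μ : Measure E) (p ρ : ℝ) (f : E → F) (y : E) : ℝ≥0∞ :=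
  ∫⁻ v in ball 0 ρ, edist (f (y + v)) (f y) ^ p ∂μ

variable {w : E → ℝ≥0∞} {p : ℝ} {f : E → F}

theorem screenedEnergy_mono {σ τ : E → ℝ≥0∞} (hστ : σ ≤ τ) :
    screenedEnergy μ w p σ f ≤ screenedEnergy μ w p τ f :=
  lintegral_mono fun x ↦ lintegral_mono_set (eball_subset_eball (hστ x))

theorem mul_lintegral_ballIncrement_le_screenedEnergy [OpensMeasurableSpace E] {σ : E → ℝ≥0∞}
    {ρ : ℝ} {c : ℝ≥0} (hc : ∀ k ∈ ball (0 : E) ρ, c ≤ w k) (hσ : ∀ x, ENNReal.ofReal ρ ≤ σ x) :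
    c * ∫⁻ y, ballIncrement μ p ρ f y ∂μ ≤ screenedEnergy μ w p σ f := by
  rw [← lintegral_const_mul' _ _ ENNReal.coe_ne_top]
  refine lintegral_mono fun y ↦ ?_
  calc c * ballIncrement μ p ρ f y
      = ∫⁻ v in ball 0 ρ, c * edist (f (y + v)) (f y) ^ p ∂μ :=
        (lintegral_const_mul' _ _ ENNReal.coe_ne_top).symm
    _ ≤ ∫⁻ v in ball 0 ρ, w v * edist (f (y + v)) (f y) ^ p ∂μ :=
        setLIntegral_mono' measurableSet_ball fun v hv ↦ by gcongr; exact hc v hv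
    _ ≤ ∫⁻ v in eball 0 (σ y), w v * edist (f (y + v)) (f y) ^ p ∂μ := by
        refine lintegral_mono_set ?_
        rw [← eball_ofReal]
        exact eball_subset_eball (hσ y)

theorem screenedEnergy_add_nsmul_le {ρ ε A : ℝ≥0∞}
    (hstep : ∀ τ : E → ℝ≥0∞, (∀ x, ρ ≤ τ x) →
      screenedEnergy μ w p (fun x ↦ τ x + ε) f ≤ A * screenedEnergy μ w p τ f)
    {σ : E → ℝ≥0∞} (hσ : ∀ x, ρ ≤ σ x) (n : ℕ) :
    screenedEnergy μ w p (fun x ↦ σ x + n • ε) f ≤ A ^ n * screenedEnergy μ w p σ f := by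
  induction n with
  | zero => simp
  | succ n ih =>
    calc screenedEnergy μ w p (fun x ↦ σ x + (n + 1) • ε) f
        = screenedEnergy μ w p (fun x ↦ σ x + n • ε + ε) f := by simp only [succ_nsmul, add_assoc]
      _ ≤ A * screenedEnergy μ w p (fun x ↦ σ x + n • ε) f := hstep _ fun x ↦ le_add_right (hσ x)
      _ ≤ A * (A ^ n * screenedEnergy μ w p σ f) := by gcongr
      _ = A ^ (n + 1) * screenedEnergy μ w p σ f := by rw [pow_succ', mul_assoc]

end Energy

theorem IsRadialKernel.exists_nnreal_le_of_mem_ball {E : Type*} [NormedAddCommGroup E]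
    [NormedSpace ℝ E] [MeasurableSpace E] {μ : Measure E} {w : E → ℝ≥0∞}
    (hw : IsRadialKernel μ w) {ρ : ℝ} (hρ : 0 ≤ ρ) :
    ∃ c : ℝ≥0, c ≠ 0 ∧ ∀ k ∈ ball (0 : E) ρ, c ≤ w k := by
  obtain ⟨y, hy⟩ : ∃ y : E, ∀ k ∈ ball (0 : E) ρ, ‖k‖ ≤ ‖y‖ := by
    rcases subsingleton_or_nontrivial E with _ | _
    · exact ⟨0, fun k _ ↦ by rw [Subsingleton.elim k 0]⟩
    · obtain ⟨y, hy⟩ := exists_norm_eq E hρ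
      exact ⟨y, fun k hk ↦ hy ▸ (mem_ball_zero_iff.1 hk).le⟩
  obtain ⟨c, hc₀, hc⟩ := ENNReal.lt_iff_exists_nnreal_btwn.1 (pos_iff_ne_zero.2 (hw.ne_zero y))
  exact ⟨c, by simpa using hc₀.ne', fun k hk ↦ hc.le.trans (hw.le_of_norm_le (hy k hk))⟩

variable {E : Type*} [NormedAddCommGroup E] [NormedSpace ℝ E] [FiniteDimensional ℝ E]
  [MeasurableSpace E] [BorelSpace E] {μ : Measure E} [μ.IsAddHaarMeasure]

theorem lintegral_comp_smul_add_le {a θ : ℝ} (ha : 0 < a) (haθ : a ≤ θ) (u : E) {φ : E → ℝ≥0∞}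
    (hφ : Measurable φ) :
    ∫⁻ k, φ (θ • k + u) ∂μ ≤ ENNReal.ofReal (a ^ finrank ℝ E)⁻¹ * ∫⁻ z, φ z ∂μ := by
  have hθ : 0 < θ := ha.trans_le haθ
  calc ∫⁻ k, φ (θ • k + u) ∂μ = ∫⁻ z, φ (z + u) ∂(μ.map (θ • ·)) := by
        rw [lintegral_map (by fun_prop) (by fun_prop)]
    _ = ENNReal.ofReal |(θ ^ finrank ℝ E)⁻¹| * ∫⁻ z, φ z ∂μ := by
        rw [Measure.map_addHaar_smul μ hθ.ne', lintegral_smul_measure,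
          lintegral_add_right_eq_self φ u, smul_eq_mul]
    _ ≤ ENNReal.ofReal (a ^ finrank ℝ E)⁻¹ * ∫⁻ z, φ z ∂μ := by
        rw [abs_of_pos (by positivity)]
        gcongr

theorem setLIntegral_compl_ball_enorm_rpow_ne_top {r ρ : ℝ} (hr : finrank ℝ E < r)
    (hρ : 0 < ρ) : ∫⁻ k in (ball (0 : E) ρ)ᶜ, ‖k‖ₑ ^ (-r) ∂μ ≠ ⊤ := by
  have hr₀ : 0 < r := (Nat.cast_nonneg _).trans_lt hr
  have hle : ∀ k ∈ (ball (0 : E) ρ)ᶜ, ‖k‖ₑ ^ (-r) ≤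
      ENNReal.ofReal ((ρ⁻¹ + 1) ^ r) * ENNReal.ofReal ((1 + ‖k‖) ^ (-r)) := by
    intro k hk
    have hk : ρ ≤ ‖k‖ := by simpa using hk
    have hk₀ : 0 < ‖k‖ := hρ.trans_le hk
    have h_one_add : 1 + ‖k‖ ≤ (ρ⁻¹ + 1) * ‖k‖ := by
      have : 1 ≤ ρ⁻¹ * ‖k‖ := by rwa [← div_eq_inv_mul, one_le_div hρ]
      linarith
    rw [← ofReal_norm, ENNReal.ofReal_rpow_of_pos hk₀, ← ENNReal.ofReal_mul (by positivity)]
    refine ENNReal.ofReal_le_ofReal ?_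
    rw [Real.rpow_neg hk₀.le, Real.rpow_neg (by positivity), ← div_eq_mul_inv,
      inv_le_comm₀ (by positivity) (by positivity), inv_div, div_le_iff₀ (by positivity),
      mul_comm, ← Real.mul_rpow (by positivity) hk₀.le]
    gcongr
  refine ((setLIntegral_mono' measurableSet_ball.compl hle).trans
    (setLIntegral_le_lintegral _ _)).trans_lt ?_ |>.ne
  rw [lintegral_const_mul' _ _ ENNReal.ofReal_ne_top]
  exact ENNReal.mul_lt_top ENNReal.ofReal_lt_top (finite_integral_one_add_norm hr)

theorem isRadialKernel_enorm_rpow {r : ℝ} (hr : finrank ℝ E < r) :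
    IsRadialKernel μ (fun k ↦ ‖k‖ₑ ^ (-r)) where
  measurable := by fun_prop
  le_of_norm_le y z hyz := by
    have hr₀ : 0 ≤ r := (Nat.cast_nonneg _).trans hr.le
    rw [ENNReal.rpow_neg, ENNReal.rpow_neg, ENNReal.inv_le_inv]
    exact ENNReal.rpow_le_rpow (enorm_le_iff_norm_le.2 hyz) hr₀
  ne_zero y := by
    have hr₀ : 0 ≤ r := (Nat.cast_nonneg _).trans hr.le
    rw [ENNReal.rpow_neg, ENNReal.inv_ne_zero]
    exact ENNReal.rpow_ne_top_of_nonneg hr₀ enorm_ne_top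
  setLIntegral_compl_ball_ne_top _ := setLIntegral_compl_ball_enorm_rpow_ne_top hr

variable {w : E → ℝ≥0∞}

theorem IsRadialKernel.setLIntegral_shell_mul_comp_smul_add_le (hw : IsRadialKernel μ w)
    {δ s : ℝ} (hδ : 0 < δ) (hs : 4 * δ ≤ s) {u : E} (hu : ‖u‖ < δ) {φ : E → ℝ≥0∞}
    (hφ : Measurable φ) :
    ∫⁻ k in ball 0 (s + δ) \ ball 0 s, w k * φ ((1 - 2 * δ / s) • k + u) ∂μ ≤
      2 ^ finrank ℝ E * ∫⁻ z in ball 0 s, w z * φ z ∂μ := by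
  have hs₀ : 0 < s := by linarith
  have hwφ : Measurable fun z ↦ w z * φ z := hw.measurable.mul hφ
  have hθ : (2 : ℝ)⁻¹ ≤ 1 - 2 * δ / s := by
    rw [le_sub_comm, div_le_iff₀ hs₀]
    linarith
  have hpoint : ∀ k, (ball 0 (s + δ) \ ball 0 s).indicator
      (fun k ↦ w k * φ ((1 - 2 * δ / s) • k + u)) k ≤
      (ball 0 s).indicator (fun z ↦ w z * φ z) ((1 - 2 * δ / s) • k + u) := by
    refine Set.indicator_le fun k hk ↦ ?_
    have hks : s ≤ ‖k‖ := by simpa using hk.2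
    have hz := norm_smul_add_lt_of_norm_lt_add hδ hs (mem_ball_zero_iff.1 hk.1) hu
    rw [Set.indicator_of_mem (mem_ball_zero_iff.2 hz)]
    gcongr
    exact hw.le_of_norm_le (hz.le.trans hks)
  rw [← lintegral_indicator (measurableSet_ball.diff measurableSet_ball),
    ← lintegral_indicator measurableSet_ball]
  refine (lintegral_mono hpoint).trans ((lintegral_comp_smul_add_le (by norm_num) hθ u
    (hwφ.indicator measurableSet_ball)).trans_eq ?_)
  simp

variable {F : Type*} [PseudoEMetricSpace F] [MeasurableSpace F] [OpensMeasurableSpace F]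
  {p : ℝ} {f : E → F}

theorem lintegral_ball_shell_near_le (hw : IsRadialKernel μ w) (hf : Measurable f) {δ s : ℝ}
    (hδ : 0 < δ) (hs : 4 * δ ≤ s) (x : E) :
    ∫⁻ u in ball 0 δ, ∫⁻ k in ball 0 (s + δ) \ ball 0 s,
      w k * edist (f (x + ((1 - 2 * δ / s) • k + u))) (f x) ^ p ∂μ ∂μ ≤
    μ (ball 0 δ) * (2 ^ finrank ℝ E *
      ∫⁻ k in ball 0 s, w k * edist (f (x + k)) (f x) ^ p ∂μ) := by
  refine (setLIntegral_mono' measurableSet_ball fun u hu ↦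
    hw.setLIntegral_shell_mul_comp_smul_add_le (φ := fun z ↦ edist (f (x + z)) (f x) ^ p)
      hδ hs (mem_ball_zero_iff.1 hu) (by fun_prop)).trans_eq ?_
  rw [setLIntegral_const, mul_comm]

variable [SecondCountableTopology F]

theorem measurable_ballIncrement (hf : Measurable f) (ρ : ℝ) :
    Measurable (ballIncrement μ p ρ f) :=
  Measurable.lintegral_prod_right' (f := fun q : E × E ↦ edist (f (q.1 + q.2)) (f q.1) ^ p)
    (by fun_prop)

theorem lintegral_ball_shell_far_le (hw : Measurable w) (hf : Measurable f) {δ s : ℝ} (hδ : 0 < δ)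
    (hs : 4 * δ ≤ s) (x : E) :
    ∫⁻ u in ball 0 δ, ∫⁻ k in ball 0 (s + δ) \ ball 0 s,
      w k * edist (f (x + k + (u - (2 * δ / s) • k))) (f (x + k)) ^ p ∂μ ∂μ ≤
    ∫⁻ k in (ball 0 (4 * δ))ᶜ, w k * ballIncrement μ p (4 * δ) f (x + k) ∂μ := by
  rw [lintegral_lintegral_swap (by fun_prop)]
  calc _ ≤ ∫⁻ k in ball 0 (s + δ) \ ball 0 s, w k * ballIncrement μ p (4 * δ) f (x + k) ∂μ := by
        refine setLIntegral_mono' (measurableSet_ball.diff measurableSet_ball) fun k hk ↦ ?_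
        rw [lintegral_const_mul _ (by fun_prop)]
        gcongr
        refine setLIntegral_ball_comp_sub_le (c := (2 * δ / s) • k) ?_
          fun v ↦ edist (f (x + k + v)) (f (x + k)) ^ p
        linarith [norm_smul_le_of_norm_lt_add hδ hs (mem_ball_zero_iff.1 hk.1)]
    _ ≤ _ := lintegral_mono_set fun k hk hk' ↦ hk.2 (ball_subset_ball hs hk')

theorem measure_ball_mul_setLIntegral_shell_le (hw : IsRadialKernel μ w) (hp : 1 ≤ p)
    (hf : Measurable f) {δ s : ℝ} (hδ : 0 < δ) (hs : 4 * δ ≤ s) (x : E) :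
    μ (ball 0 δ) * ∫⁻ k in ball 0 (s + δ) \ ball 0 s, w k * edist (f (x + k)) (f x) ^ p ∂μ ≤
      2 ^ (p - 1) * (∫⁻ k in (ball 0 (4 * δ))ᶜ, w k * ballIncrement μ p (4 * δ) f (x + k) ∂μ +
        μ (ball 0 δ) * (2 ^ finrank ℝ E *
          ∫⁻ k in ball 0 s, w k * edist (f (x + k)) (f x) ^ p ∂μ)) := by
  have hw_meas := hw.measurable
  have hK : (2 : ℝ≥0∞) ^ (p - 1) ≠ ⊤ := ENNReal.rpow_ne_top_of_nonneg (by linarith) (by simp)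
  set S : Set E := ball 0 (s + δ) \ ball 0 s
  let far (u k : E) := w k * edist (f (x + k + (u - (2 * δ / s) • k))) (f (x + k)) ^ p
  let near (u k : E) := w k * edist (f (x + ((1 - 2 * δ / s) • k + u))) (f x) ^ p
  have hnear : Measurable (Function.uncurry near) := by fun_prop
  have hnear_int : Measurable fun u ↦ ∫⁻ k in S, near u k ∂μ := hnear.lintegral_prod_right'
  have hsplit (u k : E) :
      w k * edist (f (x + k)) (f x) ^ p ≤ 2 ^ (p - 1) * (far u k + near u k) := by
    have h_mid : x + k + (u - (2 * δ / s) • k) = x + ((1 - 2 * δ / s) • k + u) := by module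
    simp only [far, near, h_mid, ← mul_add, mul_left_comm _ (w k)]
    gcongr
    exact edist_rpow_le hp _ _ _
  calc μ (ball 0 δ) * ∫⁻ k in S, w k * edist (f (x + k)) (f x) ^ p ∂μ
      = ∫⁻ _ in ball 0 δ, ∫⁻ k in S, w k * edist (f (x + k)) (f x) ^ p ∂μ ∂μ := by
        rw [setLIntegral_const, mul_comm]
    _ ≤ ∫⁻ u in ball 0 δ, ∫⁻ k in S, 2 ^ (p - 1) * (far u k + near u k) ∂μ ∂μ :=
        lintegral_mono fun u ↦ lintegral_mono fun k ↦ hsplit u k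
    _ = 2 ^ (p - 1) * (∫⁻ u in ball 0 δ, ∫⁻ k in S, far u k ∂μ ∂μ +
          ∫⁻ u in ball 0 δ, ∫⁻ k in S, near u k ∂μ ∂μ) := by
        simp only [lintegral_const_mul' _ _ hK, lintegral_add_right _ hnear.of_uncurry_left]
        rw [lintegral_add_right _ hnear_int]
    _ ≤ _ := by
        gcongr 2 ^ (p - 1) * (?_ + ?_)
        · exact lintegral_ball_shell_far_le hw_meas hf hδ hs x
        · exact lintegral_ball_shell_near_le hw hf hδ hs x

theorem measure_ball_mul_setLIntegral_eball_add_le (hw : IsRadialKernel μ w) (hp : 1 ≤ p)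
    (hf : Measurable f) {δ : ℝ} (hδ : 0 < δ) {s : ℝ≥0∞} (hs : ENNReal.ofReal (4 * δ) ≤ s)
    (x : E) :
    μ (ball 0 δ) * ∫⁻ k in eball 0 (s + ENNReal.ofReal δ), w k * edist (f (x + k)) (f x) ^ p ∂μ ≤
      μ (ball 0 δ) * (1 + 2 ^ (p - 1) * 2 ^ finrank ℝ E) *
          ∫⁻ k in eball 0 s, w k * edist (f (x + k)) (f x) ^ p ∂μ +
        2 ^ (p - 1) *
          ∫⁻ k in (ball 0 (4 * δ))ᶜ, w k * ballIncrement μ p (4 * δ) f (x + k) ∂μ := by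
  rcases eq_or_ne s ⊤ with rfl | hs_top
  · rw [top_add]
    refine le_add_right ?_
    gcongr
    exact le_mul_of_one_le_right' le_self_add
  obtain ⟨s, hs₀, rfl⟩ : ∃ t : ℝ, 0 ≤ t ∧ ENNReal.ofReal t = s :=
    ⟨s.toReal, ENNReal.toReal_nonneg, ENNReal.ofReal_toReal hs_top⟩
  rw [ENNReal.ofReal_le_ofReal_iff hs₀] at hs
  rw [← ENNReal.ofReal_add hs₀ hδ.le, eball_ofReal, eball_ofReal,
    ← lintegral_inter_add_sdiff _ (ball 0 (s + δ)) (measurableSet_ball (x := (0 : E)) (ε := s)),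
    Set.inter_eq_self_of_subset_right (ball_subset_ball (by linarith)), mul_add]
  grw [measure_ball_mul_setLIntegral_shell_le hw hp hf hδ hs x]
  exact le_of_eq (by ring)

theorem measure_ball_mul_screenedEnergy_add_le (hw : IsRadialKernel μ w) (hp : 1 ≤ p)
    (hf : Measurable f) {δ : ℝ} (hδ : 0 < δ) {σ : E → ℝ≥0∞}
    (hσ : ∀ x, ENNReal.ofReal (4 * δ) ≤ σ x) :
    μ (ball 0 δ) * screenedEnergy μ w p (fun x ↦ σ x + ENNReal.ofReal δ) f ≤
      μ (ball 0 δ) * (1 + 2 ^ (p - 1) * 2 ^ finrank ℝ E) * screenedEnergy μ w p σ f +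
        2 ^ (p - 1) * ((∫⁻ k in (ball 0 (4 * δ))ᶜ, w k ∂μ) *
          ∫⁻ y, ballIncrement μ p (4 * δ) f y ∂μ) := by
  have hw_meas := hw.measurable
  have hinc : Measurable (ballIncrement μ p (4 * δ) f) := measurable_ballIncrement hf _
  have hfar : Measurable fun x ↦
      ∫⁻ k in (ball 0 (4 * δ))ᶜ, w k * ballIncrement μ p (4 * δ) f (x + k) ∂μ :=
    Measurable.lintegral_prod_right'
      (f := fun q : E × E ↦ w q.2 * ballIncrement μ p (4 * δ) f (q.1 + q.2)) (by fun_prop)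
  have hV : μ (ball (0 : E) δ) ≠ ⊤ := measure_ball_lt_top.ne
  have hK : (2 : ℝ≥0∞) ^ (p - 1) ≠ ⊤ := ENNReal.rpow_ne_top_of_nonneg (by linarith) (by simp)
  have hVK : μ (ball (0 : E) δ) * (1 + 2 ^ (p - 1) * 2 ^ finrank ℝ E) ≠ ⊤ := by finiteness
  simp only [screenedEnergy]
  rw [← lintegral_lintegral_mul_comp_add hw_meas hinc, ← lintegral_const_mul' _ _ hV,
    ← lintegral_const_mul' _ _ hVK, ← lintegral_const_mul' _ _ hK,
    ← lintegral_add_right _ (hfar.const_mul _)]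
  exact lintegral_mono fun x ↦ measure_ball_mul_setLIntegral_eball_add_le hw hp hf hδ (hσ x) x

theorem exists_screenedEnergy_add_le_mul (F : Type*) [PseudoEMetricSpace F] [MeasurableSpace F]
    [OpensMeasurableSpace F] [SecondCountableTopology F] (hw : IsRadialKernel μ w) (hp : 1 ≤ p)
    {δ : ℝ} (hδ : 0 < δ) :
    ∃ A : ℝ≥0∞, A ≠ ⊤ ∧ ∀ σ : E → ℝ≥0∞, (∀ x, ENNReal.ofReal (4 * δ) ≤ σ x) →
      ∀ f : E → F, Measurable f →
        screenedEnergy μ w p (fun x ↦ σ x + ENNReal.ofReal δ) f ≤ A * screenedEnergy μ w p σ f := by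
  obtain ⟨c, hc₀, hc⟩ := hw.exists_nnreal_le_of_mem_ball (by positivity : 0 ≤ 4 * δ)
  have hT := hw.setLIntegral_compl_ball_ne_top (by positivity : 0 < 4 * δ)
  set V := μ (ball (0 : E) δ)
  have hV : V ≠ ⊤ := measure_ball_lt_top.ne
  have hV₀ : V ≠ 0 := (measure_ball_pos μ _ hδ).ne'
  set K : ℝ≥0∞ := 2 ^ (p - 1)
  have hK : K ≠ ⊤ := ENNReal.rpow_ne_top_of_nonneg (by linarith) (by simp)
  set T := ∫⁻ k in (ball 0 (4 * δ))ᶜ, w k ∂μ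
  refine ⟨V⁻¹ * (V * (1 + K * 2 ^ finrank ℝ E) + K * (T * c⁻¹)), by finiteness,
    fun σ hσ f hf ↦ ?_⟩
  have hinc : ∫⁻ y, ballIncrement μ p (4 * δ) f y ∂μ ≤ c⁻¹ * screenedEnergy μ w p σ f := by
    rw [ENNReal.coe_inv hc₀, ← ENNReal.div_eq_inv_mul,
      ENNReal.le_div_iff_mul_le (by simp [hc₀]) (by simp), mul_comm]
    exact mul_lintegral_ballIncrement_le_screenedEnergy hc hσ
  rw [mul_assoc, ← ENNReal.div_eq_inv_mul, ENNReal.le_div_iff_mul_le (.inl hV₀) (.inl hV),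
    mul_comm _ V]
  grw [measure_ball_mul_screenedEnergy_add_le hw hp hf hδ hσ, hinc]
  exact le_of_eq (by ring)

theorem stmt_2_general (F : Type*) [PseudoEMetricSpace F] [MeasurableSpace F]
    [OpensMeasurableSpace F] [SecondCountableTopology F] (hw : IsRadialKernel μ w) (hp : 1 ≤ p)
    {ρ : ℝ} (hρ : 0 < ρ) (δ : ℝ) :
    ∃ C : ℝ, 0 < C ∧ ∀ σ : E → ℝ≥0∞, (∀ x, ENNReal.ofReal ρ ≤ σ x) →
      ∀ f : E → F, Measurable f →
        screenedEnergy μ w p (fun x ↦ σ x + ENNReal.ofReal δ) f ≤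
          ENNReal.ofReal (C ^ p) * screenedEnergy μ w p σ f := by
  obtain ⟨A, hA, hstep⟩ := exists_screenedEnergy_add_le_mul F hw hp (by positivity : 0 < ρ / 4)
  rw [mul_div_cancel₀ ρ four_ne_zero] at hstep
  obtain ⟨n, hn⟩ := Archimedean.arch δ (by positivity : 0 < ρ / 4)
  obtain ⟨C, hC₀, hC⟩ := exists_pos_le_ofReal_rpow (ENNReal.pow_ne_top hA (n := n)) hp
  refine ⟨C, hC₀, fun σ hσ f hf ↦ ?_⟩
  have hδn : ENNReal.ofReal δ ≤ n • ENNReal.ofReal (ρ / 4) := by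
    rw [← ENNReal.ofReal_nsmul]
    exact ENNReal.ofReal_le_ofReal hn
  calc screenedEnergy μ w p (fun x ↦ σ x + ENNReal.ofReal δ) f
      ≤ screenedEnergy μ w p (fun x ↦ σ x + n • ENNReal.ofReal (ρ / 4)) f :=
        screenedEnergy_mono fun x ↦ by gcongr
    _ ≤ A ^ n * screenedEnergy μ w p σ f :=
        screenedEnergy_add_nsmul_le (fun τ hτ ↦ hstep τ hτ f hf) hσ n
    _ ≤ ENNReal.ofReal (C ^ p) * screenedEnergy μ w p σ f := by gcongr

theorem screenedSq_eq_screenedEnergy (d : ℕ) (σ : EuclideanSpace ℝ (Fin d) → ℝ≥0∞)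
    (f : EuclideanSpace ℝ (Fin d) → ℝ) :
    screenedSq d σ f = screenedEnergy volume (fun k ↦ ‖k‖ₑ ^ (-(d + 1 : ℝ))) 2 σ f := by
  have hintegrand (x k : EuclideanSpace ℝ (Fin d)) :
      ENNReal.ofReal ((f (x + k) - f x) ^ 2 / ‖k‖ ^ (d + 1)) =
        ‖k‖ₑ ^ (-(d + 1 : ℝ)) * edist (f (x + k)) (f x) ^ (2 : ℝ) := by
    rcases eq_or_ne k 0 with rfl | hk
    · simp
    have hexp : (d + 1 : ℝ) = ((d + 1 : ℕ) : ℝ) := by push_cast; rfl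
    rw [div_eq_inv_mul, ENNReal.ofReal_mul (by positivity),
      ENNReal.ofReal_inv_of_pos (by positivity), ENNReal.ofReal_pow (norm_nonneg k), ofReal_norm,
      ENNReal.rpow_neg, hexp, ENNReal.rpow_natCast, ENNReal.rpow_ofNat, edist_eq_enorm_sub,
      ← ofReal_norm (f (x + k) - f x), ← ENNReal.ofReal_pow (norm_nonneg _), Real.norm_eq_abs,
      sq_abs]
  simp only [screenedSq, screenedEnergy, hintegrand, eball, edist_zero_right, enorm_eq_nnnorm]

/-- one-step enlargement of the screening function.  If
`σ : ℝ^d → (0,∞]` satisfies `σ ≥ 2h > 0` and `δ = h/10`, then there is a constant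
`C = C(d,h)` such that `‖f‖_{H̃^{1/2}_{σ+δ}} ≤ C ‖f‖_{H̃^{1/2}_σ}` for all
`f ∈ H̃^{1/2}_σ(ℝ^d)`. -/
theorem stmt_2 (d : ℕ) (h : ℝ) (hh : 0 < h) :
    ∃ C : ℝ, 0 < C ∧
      ∀ (σ : EuclideanSpace ℝ (Fin d) → ℝ≥0∞),
        (∀ x, ENNReal.ofReal (2 * h) ≤ σ x) →
        ∀ (f : EuclideanSpace ℝ (Fin d) → ℝ), Measurable f →
          screenedSq d σ f < ⊤ →
          screenedSq d (fun x => σ x + ENNReal.ofReal (h / 10)) f ≤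
            ENNReal.ofReal (C ^ 2) * screenedSq d σ f := by
  obtain ⟨C, hC₀, hC⟩ := stmt_2_general ℝ (isRadialKernel_enorm_rpow
    (E := EuclideanSpace ℝ (Fin d)) (μ := volume) (r := d + 1) (by simp))
    one_le_two (mul_pos two_pos hh) (h / 10)
  exact ⟨C, hC₀, fun σ hσ f hf _ ↦ by
    simpa only [screenedSq_eq_screenedEnergy, Real.rpow_two] using hC σ hσ f hf⟩

end
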